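/- arXiv:1311.4905 — 5 statements merged into one kernel-verified Lean document; each statement's English description precedes it below -/
import Mathlib

section
/- Let N ≥ 1, let g be an N×N complex unitary matrix, and for β ∈ ℂ set Z(β) := det(I − e^{−β}·g). Then for every integer j ≥ 1 and every β with Re β > 0 (so Z(β) ≠ 0), one has (−1)^j · Z^{(j)}(β)/Z(β) = Σ_{r=1}^{∞} e^{−βr} · H_j^{(r)}(g), the series converging absolutely; here Z^{(j)} denotes the j-th derivative of Z with respect to β. -/
open Matrix MeasureTheory

noncomputable instance (N : ℕ) : MeasurableSpace (Matrix.unitaryGroup (Fin N) ℂ) := borel _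
instance (N : ℕ) : BorelSpace (Matrix.unitaryGroup (Fin N) ℂ) := ⟨rfl⟩

/- The quantities `H_j^{(n)}(g)`: `H_1^{(n)}(g) = −Tr(g^n)` and, for `j ≥ 2`,
`H_j^{(n)} = Σ_{ℓ+λ=n, ℓ,λ≥1} H_1^{(λ)} H_{j−1}^{(ℓ)} + n·H_{j−1}^{(n)}`
(here `H_1^{(λ)} = −Tr(g^λ)` is inlined in the recursion). -/
noncomputable def matH {N : ℕ} : ℕ → ℕ → Matrix (Fin N) (Fin N) ℂ → ℂ
  | 0, _, _ => 0
  | 1, n, g => -((g ^ n).trace)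
  | (j + 2), n, g =>
      (∑ ℓ ∈ Finset.Ico 1 n, (-((g ^ (n - ℓ)).trace)) * matH (j + 1) ℓ g)
        + (n : ℂ) * matH (j + 1) n g

section Helpers

open scoped Matrix.Norms.L2Operator in
lemma aux_resolvent {N : ℕ} (hN : 1 ≤ N) (g : Matrix (Fin N) (Fin N) ℂ)
    (hg : g ∈ Matrix.unitaryGroup (Fin N) ℂ) (x : ℂ) (hx : ‖x‖ < 1) :
    ∃ R : Matrix (Fin N) (Fin N) ℂ, R * (1 - x • g) = 1 ∧
      HasSum (fun n : ℕ => x ^ n * (g ^ (n + 1)).trace) (R * g).trace := by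
  have : Nonempty (Fin N) := ⟨⟨0, hN⟩⟩
  have h1 : ‖g‖ = 1 := CStarRing.norm_of_mem_unitary hg
  have h2 : ‖x • g‖ < 1 := by rw [norm_smul, h1, mul_one]; exact hx
  refine ⟨∑' n : ℕ, (x • g) ^ n, geom_series_mul_neg _ h2, ?_⟩
  have h3 := ((summable_geometric_of_norm_lt_one h2).hasSum.mul_right g).map
    (Matrix.traceAddMonoidHom (Fin N) ℂ) (Continuous.matrix_trace continuous_id)
  convert! h3 using 1
  ext n
  simp [smul_pow, pow_succ]

lemma aux_det_deriv {N : ℕ} (g R : Matrix (Fin N) (Fin N) ℂ) (x : ℂ)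
    (hR : R * (1 - x • g) = 1) :
    HasDerivAt (fun y : ℂ => Matrix.det (1 - y • g))
      (-(R * g).trace * Matrix.det (1 - x • g)) x := by
  have hR' : (1 - x • g) * R = 1 := mul_eq_one_comm.mp hR
  have key : (fun y : ℂ => Matrix.det (1 - y • g)) =
      fun y : ℂ => Matrix.det (1 - x • g) * Matrix.det (1 + (x - y) • (R * g)) := by
    ext y
    rw [← Matrix.det_mul, mul_add, mul_one, mul_smul_comm, ← mul_assoc, hR', one_mul, sub_smul]
    congr 1
    abel
  rw [key]
  have hexp : ∀ y : ℂ, Matrix.det (1 + (x - y) • (R * g)) = _ :=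
    fun y => Matrix.det_one_add_smul (x - y) (R * g)
  rw [show (fun y : ℂ => Matrix.det (1 - x • g) * Matrix.det (1 + (x - y) • (R * g))) = _ from
    funext fun y => congrArg (fun t => Matrix.det (1 - x • g) * t) (hexp y)]
  clear hexp
  generalize (Matrix.det (1 + (Polynomial.X : Polynomial ℂ) •
    (R * g).map Polynomial.C)).divX.divX = q
  have hs : HasDerivAt (fun y : ℂ => x - y) (-1) x := by
    simpa using (hasDerivAt_id x).const_sub x
  have hq : HasDerivAt (fun y : ℂ => Polynomial.eval (x - y) q)
      (Polynomial.eval (x - x) (Polynomial.derivative q) * (-1)) x :=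
    HasDerivAt.comp x (q.hasDerivAt (x - x)) hs
  have := ((((hs.const_mul (R * g).trace).const_add 1).add (hq.mul (hs.pow 2)))).const_mul
    (Matrix.det (1 - x • g))
  convert! this using 1
  simp
  ring

lemma aux_contDiff {N : ℕ} (g : Matrix (Fin N) (Fin N) ℂ) :
    ContDiff ℂ ⊤ (fun s : ℂ => Matrix.det (1 - Complex.exp (-s) • g)) := by
  simp only [Matrix.det_apply, Matrix.sub_apply, Matrix.smul_apply]
  fun_prop

lemma aux_norm_exp (s : ℂ) (r : ℕ) :
    ‖Complex.exp (-s * r)‖ = Real.exp (-s.re) ^ r := by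
  rw [Complex.norm_exp, ← Real.exp_nat_mul]
  congr 1
  simp
  ring

lemma aux_exp_lt {s : ℂ} (hs : 0 < s.re) : ‖Complex.exp (-s)‖ < 1 := by
  rw [Complex.norm_exp]
  simpa using hs

/-- Coefficients, extended by zero at index zero. -/
noncomputable def auxC {N : ℕ} (g : Matrix (Fin N) (Fin N) ℂ) (j r : ℕ) : ℂ :=
  if r = 0 then 0 else matH j r g

lemma aux_trace_bound {N : ℕ} (g : Matrix (Fin N) (Fin N) ℂ)
    (hg : g ∈ Matrix.unitaryGroup (Fin N) ℂ) (n : ℕ) : ‖(g ^ n).trace‖ ≤ N := by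
  have h : g ^ n ∈ Matrix.unitaryGroup (Fin N) ℂ := pow_mem hg n
  refine (norm_sum_le _ _).trans ?_
  refine (Finset.sum_le_sum (fun i _ => entry_norm_bound_of_unitary h i i)).trans ?_
  simp

lemma aux_bound {N : ℕ} (g : Matrix (Fin N) (Fin N) ℂ)
    (hg : g ∈ Matrix.unitaryGroup (Fin N) ℂ) (j : ℕ) (n : ℕ) :
    ‖matH (j + 1) n g‖ ≤ (N + 1 : ℝ) ^ (j + 1) * (n : ℝ) ^ j := by
  induction j generalizing n with
  | zero =>
    simp only [matH, norm_neg]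
    have := aux_trace_bound g hg n
    simp
    linarith
  | succ j ih =>
    have hs : ‖∑ ℓ ∈ Finset.Ico 1 n, (-((g ^ (n - ℓ)).trace)) * matH (j + 1) ℓ g‖ ≤
        n * (N * ((N + 1 : ℝ) ^ (j + 1) * (n : ℝ) ^ j)) := by
      refine (norm_sum_le _ _).trans ?_
      have : ∀ ℓ ∈ Finset.Ico 1 n, ‖(-((g ^ (n - ℓ)).trace)) * matH (j + 1) ℓ g‖ ≤
          N * ((N + 1 : ℝ) ^ (j + 1) * (n : ℝ) ^ j) := by
        intro ℓ hℓ
        rw [norm_mul, norm_neg]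
        have hle : (ℓ : ℝ) ≤ n := by
          exact_mod_cast (Finset.mem_Ico.mp hℓ).2.le
        have := aux_trace_bound g hg (n - ℓ)
        have h2 := ih ℓ
        have h3 : (N + 1 : ℝ) ^ (j + 1) * (ℓ : ℝ) ^ j ≤ (N + 1 : ℝ) ^ (j + 1) * (n : ℝ) ^ j := by
          gcongr
        exact mul_le_mul this (h2.trans h3) (norm_nonneg _) (by positivity)
      refine (Finset.sum_le_sum this).trans ?_
      rw [Finset.sum_const, nsmul_eq_mul]
      gcongr
      simp
    have h4 : ‖(n : ℂ) * matH (j + 1) n g‖ ≤ n * ((N + 1 : ℝ) ^ (j + 1) * (n : ℝ) ^ j) := by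
      rw [norm_mul, Complex.norm_natCast]
      gcongr
      exact ih n
    have h5 := norm_add_le
      (∑ ℓ ∈ Finset.Ico 1 n, (-((g ^ (n - ℓ)).trace)) * matH (j + 1) ℓ g)
      ((n : ℂ) * matH (j + 1) n g)
    rw [matH]
    refine (h5.trans (add_le_add hs h4)).trans (le_of_eq ?_)
    ring

lemma auxC_bound {N : ℕ} (g : Matrix (Fin N) (Fin N) ℂ)
    (hg : g ∈ Matrix.unitaryGroup (Fin N) ℂ) (j : ℕ) (n : ℕ) :
    ‖auxC g (j + 1) n‖ ≤ (N + 1 : ℝ) ^ (j + 1) * (n : ℝ) ^ j := by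
  unfold auxC
  split_ifs
  · simp; positivity
  · exact aux_bound g hg j n

lemma aux_summable_major {N : ℕ} (j : ℕ) {σ : ℝ} (hσ : 0 < σ) :
    Summable (fun n : ℕ => Real.exp (-σ) ^ n * ((N + 1 : ℝ) ^ (j + 1) * (n : ℝ) ^ j)) := by
  have h : ‖Real.exp (-σ)‖ < 1 := by
    rw [Real.norm_eq_abs, abs_of_pos (Real.exp_pos _)]
    simpa using hσ
  refine ((summable_pow_mul_geometric_of_norm_lt_one j h).mul_left
    ((N + 1 : ℝ) ^ (j + 1))).congr ?_
  intro n
  ring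

lemma aux_term_bound {N : ℕ} (g : Matrix (Fin N) (Fin N) ℂ)
    (hg : g ∈ Matrix.unitaryGroup (Fin N) ℂ) (j : ℕ) {σ : ℝ} {s : ℂ} (hs : σ ≤ s.re) (n : ℕ) :
    ‖Complex.exp (-s * n) * auxC g (j + 1) n‖ ≤
      Real.exp (-σ) ^ n * ((N + 1 : ℝ) ^ (j + 1) * (n : ℝ) ^ j) := by
  rw [norm_mul, aux_norm_exp]
  have := auxC_bound g hg j n
  gcongr

lemma aux_summable {N : ℕ} (g : Matrix (Fin N) (Fin N) ℂ)
    (hg : g ∈ Matrix.unitaryGroup (Fin N) ℂ) (j : ℕ) {s : ℂ} (hs : 0 < s.re) :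
    Summable (fun n : ℕ => ‖Complex.exp (-s * n) * auxC g (j + 1) n‖) :=
  Summable.of_nonneg_of_le (fun _ => norm_nonneg _)
    (fun n => aux_term_bound g hg j le_rfl n) (aux_summable_major (N := N) j hs)

lemma aux_deriv {N : ℕ} (g : Matrix (Fin N) (Fin N) ℂ)
    (hg : g ∈ Matrix.unitaryGroup (Fin N) ℂ) (j : ℕ) {s : ℂ} (hs : 0 < s.re) :
    HasSum (fun n : ℕ => -(n : ℂ) * (Complex.exp (-s * n) * auxC g (j + 1) n))
      (deriv (fun w : ℂ => ∑' n : ℕ, Complex.exp (-w * n) * auxC g (j + 1) n) s) := by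
  have hσ : 0 < s.re / 2 := by linarith
  have hd : ∀ (n : ℕ) (w : ℂ), HasDerivAt (fun w : ℂ => Complex.exp (-w * n) * auxC g (j + 1) n)
      (-(n : ℂ) * (Complex.exp (-w * n) * auxC g (j + 1) n)) w := by
    intro n w
    have h := ((((hasDerivAt_id w).neg).mul_const (n : ℂ)).cexp).mul_const (auxC g (j + 1) n)
    convert! h using 1
    simp
    ring
  have := Complex.hasSum_deriv_of_summable_norm (U := {w : ℂ | s.re / 2 < w.re}) (z := s)
    (F := fun (n : ℕ) (w : ℂ) => Complex.exp (-w * n) * auxC g (j + 1) n)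
    (aux_summable_major (N := N) j hσ)
    (fun n w _ => (hd n w).differentiableAt.differentiableWithinAt)
    (isOpen_lt continuous_const Complex.continuous_re)
    (fun n w hw => aux_term_bound g hg j (le_of_lt hw) n)
    (by simp only [Set.mem_ofPred_eq]; linarith)
  have he : (fun n : ℕ => -(n : ℂ) * (Complex.exp (-s * n) * auxC g (j + 1) n)) =
      fun n : ℕ => deriv (fun w : ℂ => Complex.exp (-w * n) * auxC g (j + 1) n) s :=
    funext fun n => ((hd n s).deriv).symm
  rw [he]
  exact this

lemma aux_rec {N : ℕ} (g : Matrix (Fin N) (Fin N) ℂ) (j n : ℕ) (s : ℂ) :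
    Complex.exp (-s * n) * auxC g (j + 2) n =
      (∑ kl ∈ Finset.HasAntidiagonal.antidiagonal n, (Complex.exp (-s * kl.1) * auxC g (j + 1) kl.1) *
        (Complex.exp (-s * kl.2) * auxC g 1 kl.2)) -
      -(n : ℂ) * (Complex.exp (-s * n) * auxC g (j + 1) n) := by
  have h1 : (∑ kl ∈ Finset.HasAntidiagonal.antidiagonal n, (Complex.exp (-s * kl.1) * auxC g (j + 1) kl.1) *
        (Complex.exp (-s * kl.2) * auxC g 1 kl.2)) =
      Complex.exp (-s * n) *
        ∑ kl ∈ Finset.HasAntidiagonal.antidiagonal n, auxC g (j + 1) kl.1 * auxC g 1 kl.2 := by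
    rw [Finset.mul_sum]
    refine Finset.sum_congr rfl fun kl hkl => ?_
    rw [← Finset.HasAntidiagonal.mem_antidiagonal.mp hkl]
    push_cast
    rw [mul_add, Complex.exp_add]
    ring
  have h2 : ∑ kl ∈ Finset.HasAntidiagonal.antidiagonal n, auxC g (j + 1) kl.1 * auxC g 1 kl.2 =
      ∑ ℓ ∈ Finset.Ico 1 n, (-((g ^ (n - ℓ)).trace)) * matH (j + 1) ℓ g := by
    rw [Finset.Nat.sum_antidiagonal_eq_sum_range_succ
      (fun a b => auxC g (j + 1) a * auxC g 1 b)]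
    symm
    refine Finset.sum_subset_zero_on_sdiff ?_ ?_ ?_
    · intro a ha
      simp at ha ⊢
      omega
    · intro a ha
      simp only [Finset.mem_sdiff, Finset.mem_range, Finset.mem_Ico] at ha
      have : a = 0 ∨ n - a = 0 := by omega
      rcases this with h | h <;> simp [auxC, h]
    · intro a ha
      simp only [Finset.mem_Ico] at ha
      have h1 : a ≠ 0 := by omega
      have h2 : n - a ≠ 0 := by omega
      simp only [auxC, h1, h2, if_false, matH]
      ring
  rw [h1, h2]
  by_cases hn : n = 0
  · subst hn; simp [auxC]
  · simp only [auxC, hn, if_false]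
    rw [matH]
    ring

lemma aux_main {N : ℕ} (hN : 1 ≤ N) (g : Matrix (Fin N) (Fin N) ℂ)
    (hg : g ∈ Matrix.unitaryGroup (Fin N) ℂ) (j : ℕ) :
    ∀ s : ℂ, 0 < s.re → HasSum (fun n : ℕ => Complex.exp (-s * n) * auxC g (j + 1) n)
      ((-1 : ℂ) ^ (j + 1) *
        iteratedDeriv (j + 1) (fun s : ℂ => Matrix.det (1 - Complex.exp (-s) • g)) s /
          Matrix.det (1 - Complex.exp (-s) • g)) := by
  set Z : ℂ → ℂ := fun s : ℂ => Matrix.det (1 - Complex.exp (-s) • g) with hZ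
  have hne : ∀ s : ℂ, 0 < s.re → Z s ≠ 0 := by
    intro s hs h0
    obtain ⟨R, hR, -⟩ := aux_resolvent hN g hg _ (aux_exp_lt hs)
    have := congrArg Matrix.det hR
    rw [Matrix.det_mul, Matrix.det_one] at this
    change R.det * Z s = 1 at this
    simp [h0] at this
  have hdiff : ∀ (k : ℕ) (s : ℂ),
      HasDerivAt (iteratedDeriv k Z) (iteratedDeriv (k + 1) Z s) s := by
    intro k s
    rw [iteratedDeriv_succ]
    exact (((aux_contDiff g).differentiable_iteratedDeriv k
      (WithTop.coe_lt_top _)) s).hasDerivAt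
  have base : ∀ s : ℂ, 0 < s.re → HasSum (fun n : ℕ => Complex.exp (-s * n) * auxC g 1 n)
      ((-1 : ℂ) ^ 1 * iteratedDeriv 1 Z s / Z s) := by
    intro s hs
    obtain ⟨R, hR, hsum⟩ := aux_resolvent hN g hg _ (aux_exp_lt hs)
    have h1 := aux_det_deriv g R _ hR
    have h2 : HasDerivAt (fun s : ℂ => Complex.exp (-s)) (-Complex.exp (-s)) s := by
      simpa using (hasDerivAt_id s).neg.cexp
    have h3 : HasDerivAt Z (-(R * g).trace * Matrix.det (1 - Complex.exp (-s) • g) *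
        -Complex.exp (-s)) s := HasDerivAt.comp (h₂ := fun y : ℂ => Matrix.det (1 - y • g)) s h1 h2
    rw [← hasSum_nat_add_iff' 1, iteratedDeriv_one, h3.deriv]
    have h4 := hsum.mul_left (-Complex.exp (-s))
    convert! h4 using 1
    · ext n
      have : Complex.exp (-s * ((n + 1 : ℕ) : ℂ)) = Complex.exp (-s) ^ (n + 1) := by
        rw [← Complex.exp_nat_mul]; congr 1; ring
      rw [this]
      simp only [auxC, matH]
      simp
      ring
    · have := hne s hs
      change Matrix.det (1 - Complex.exp (-s) • g) ≠ 0 at this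
      simp only [hZ, auxC]
      field_simp
      simp
  induction j with
  | zero => exact base
  | succ j ih =>
    intro s hs
    have hA := ih s hs
    have hB := base s hs
    have nA := aux_summable g hg j hs
    have nB := aux_summable g hg 0 hs
    have hP := tsum_mul_tsum_eq_tsum_sum_antidiagonal_of_summable_norm nA nB
    have hPs := (summable_norm_sum_mul_antidiagonal_of_summable_norm nA nB).of_norm.hasSum
    rw [← hP] at hPs
    have hS := hPs.sub (aux_deriv g hg j hs)
    have hev : (fun w : ℂ => ∑' n : ℕ, Complex.exp (-w * n) * auxC g (j + 1) n) =ᶠ[nhds s]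
        fun w => (-1 : ℂ) ^ (j + 1) * iteratedDeriv (j + 1) Z w / Z w := by
      filter_upwards [(isOpen_lt continuous_const Complex.continuous_re).mem_nhds hs] with w hw
      exact (ih w hw).tsum_eq
    have hZd := hdiff 0 s
    rw [iteratedDeriv_zero] at hZd
    have hFd := (((hdiff (j + 1) s).const_mul ((-1 : ℂ) ^ (j + 1))).div hZd (hne s hs))
    have hev' : deriv (fun w : ℂ => ∑' n : ℕ, Complex.exp (-w * n) * auxC g (j + 1) n) s = _ :=
      hev.deriv_eq.trans hFd.deriv
    rw [hev', hA.tsum_eq, hB.tsum_eq] at hS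
    have he : (fun n : ℕ => Complex.exp (-s * n) * auxC g (j + 1 + 1) n) = _ :=
      funext fun n => aux_rec g j n s
    rw [he]
    convert! hS using 1
    · have := hne s hs
      change _ / Z s = _ / Z s * _ - _
      simp only [zero_add]
      field_simp
      ring

end Helpers

/-- Equation (A.4) of Rodgers, "The covariance of almost-primes in F_q[T]":
for `g` unitary, `Z(β) = det(1 − e^{−β} g)`, `j ≥ 1` and `Re β > 0`,
`(−1)^j Z^{(j)}(β)/Z(β) = Σ_{r=1}^∞ e^{−βr} H_j^{(r)}(g)`, converging absolutely. -/
theorem neg_one_pow_iteratedDeriv_det_div (N : ℕ) (hN : 1 ≤ N)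
    (g : Matrix (Fin N) (Fin N) ℂ) (hg : g ∈ Matrix.unitaryGroup (Fin N) ℂ)
    (j : ℕ) (hj : 1 ≤ j) (β : ℂ) (hβ : 0 < β.re) :
    HasSum (fun r : ℕ => Complex.exp (-β * ((r : ℂ) + 1)) * matH j (r + 1) g)
        ((-1 : ℂ) ^ j *
            iteratedDeriv j (fun s : ℂ => Matrix.det (1 - Complex.exp (-s) • g)) β /
          Matrix.det (1 - Complex.exp (-β) • g))
      ∧ Summable (fun r : ℕ => ‖Complex.exp (-β * ((r : ℂ) + 1)) * matH j (r + 1) g‖) := by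
  obtain ⟨k, rfl⟩ : ∃ k, j = k + 1 := ⟨j - 1, by omega⟩
  have e : ∀ r : ℕ, Complex.exp (-β * ((r : ℂ) + 1)) * matH (k + 1) (r + 1) g =
      Complex.exp (-β * ((r + 1 : ℕ) : ℂ)) * auxC g (k + 1) (r + 1) := by
    intro r
    simp [auxC]
  simp only [e]
  constructor
  · have h := (hasSum_nat_add_iff' 1).mpr (aux_main hN g hg k β hβ)
    simpa [auxC] using h
  · exact (summable_nat_add_iff 1).mpr (aux_summable g hg k hβ)
end

section
/- For all integers N ≥ 1, j ≥ 1 and r ≥ 1: ∫_{U(N)} H_j^{(r)}(g) dg = 0, where the integral is with respect to Haar probability measure on U(N). -/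
open Matrix MeasureTheory

theorem matH_smul {N : ℕ} (c : ℂ) (g : Matrix (Fin N) (Fin N) ℂ) (j : ℕ) :
    ∀ n : ℕ, matH j n (c • g) = c ^ n * matH j n g := by
  induction j with
  | zero => intro n; simp [matH]
  | succ j ih =>
    intro n
    cases j with
    | zero => simp [matH, smul_pow, Matrix.trace_smul]
    | succ j =>
      simp only [matH]
      rw [ih n, mul_add, Finset.mul_sum]
      congr 1
      · refine Finset.sum_congr rfl fun l hl => ?_
        have hl' := Finset.mem_Ico.1 hl
        rw [ih l, smul_pow, Matrix.trace_smul, smul_eq_mul]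
        have h : c ^ n = c ^ (n - l) * c ^ l := by
          rw [← pow_add]; congr 1; omega
        rw [h]; ring
      · ring

/-- For all `N, j, r ≥ 1`, `∫_{U(N)} H_j^{(r)}(g) dg = 0` with respect to
Haar probability measure on `U(N)`. -/
theorem integral_H_eq_zero (N j r : ℕ) (hN : 1 ≤ N) (hj : 1 ≤ j) (hr : 1 ≤ r)
    (μ : Measure (Matrix.unitaryGroup (Fin N) ℂ)) [μ.IsHaarMeasure] [IsProbabilityMeasure μ] :
    ∫ g : Matrix.unitaryGroup (Fin N) ℂ, matH j r (g : Matrix (Fin N) (Fin N) ℂ) ∂μ = 0 := by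
  obtain ⟨c, hc, hcr⟩ : ∃ c : ℂ, star c * c = 1 ∧ c ^ r = -1 := by
    refine ⟨Complex.exp (((Real.pi / r : ℝ) : ℂ) * Complex.I), ?_, ?_⟩
    · have h := Complex.norm_exp_ofReal_mul_I (Real.pi / r)
      rw [Complex.star_def, Complex.conj_mul', h]
      simp
    · rw [← Complex.exp_nat_mul, ← Complex.exp_pi_mul_I]
      congr 1
      have : (r : ℂ) ≠ 0 := by exact_mod_cast (by omega : r ≠ 0)
      push_cast
      field_simp
  have hu : c • (1 : Matrix (Fin N) (Fin N) ℂ) ∈ Matrix.unitaryGroup (Fin N) ℂ := by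
    rw [Matrix.mem_unitaryGroup_iff', star_smul, star_one, smul_mul_smul_comm, hc]
    simp
  have key := integral_mul_left_eq_self (μ := μ)
    (fun g : Matrix.unitaryGroup (Fin N) ℂ => matH j r (g : Matrix (Fin N) (Fin N) ℂ))
    ⟨_, hu⟩
  have h2 : ∀ g : Matrix.unitaryGroup (Fin N) ℂ,
      matH j r (((⟨_, hu⟩ * g : Matrix.unitaryGroup (Fin N) ℂ)) : Matrix (Fin N) (Fin N) ℂ)
        = - matH j r (g : Matrix (Fin N) (Fin N) ℂ) := by
    intro g
    have : (((⟨_, hu⟩ * g : Matrix.unitaryGroup (Fin N) ℂ)) : Matrix (Fin N) (Fin N) ℂ)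
        = c • (g : Matrix (Fin N) (Fin N) ℂ) := by
      change (c • (1 : Matrix (Fin N) (Fin N) ℂ)) * (g : Matrix (Fin N) (Fin N) ℂ) = _
      rw [smul_mul_assoc, one_mul]
    rw [this, matH_smul, hcr, neg_one_mul]
  simp only [h2] at key
  rw [integral_neg] at key
  exact self_eq_neg.1 key.symm
end

section
/- For every finite field F_q, every integer j ≥ 1, and every nonzero polynomial f ∈ F_q[T]: Λ_j(f) = Σ'_{d|f} μ(d)·(deg(f/d))^j, where the primed sum runs over the monic divisors d of f. -/
open Polynomial

/-- The von Mangoldt function on `F_q[T]`: `Λ(f) = deg P` if `f = c·P^k` with `c ≠ 0`,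
`P` monic irreducible and `k ≥ 1`, and `Λ(f) = 0` otherwise. -/
noncomputable def polyVM {F : Type*} [Field F] (f : F[X]) : ℕ :=
  sSup {m : ℕ | ∃ (c : F) (P : F[X]) (k : ℕ),
    c ≠ 0 ∧ P.Monic ∧ Irreducible P ∧ 1 ≤ k ∧ f = C c * P ^ k ∧ m = P.natDegree}

/- The higher-order von Mangoldt functions: `Λ_0(f) = 1` iff `f` is a nonzero constant,
`Λ_1 = Λ`, and `Λ_j(f) = Σ'_{d ∣ f} Λ_{j-1}(d) Λ(f/d) + Λ_{j-1}(f)·deg f` for `j ≥ 2`,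
the sum being over monic divisors `d` of `f`. -/
open Classical in
noncomputable def polyVMJ {F : Type*} [Field F] : ℕ → F[X] → ℕ
  | 0 => fun f => if f ≠ 0 ∧ f.natDegree = 0 then 1 else 0
  | 1 => fun f => polyVM f
  | (j + 2) => fun f =>
      (∑ᶠ d ∈ {d : F[X] | d.Monic ∧ d ∣ f}, polyVMJ (j + 1) d * polyVM (f / d))
        + polyVMJ (j + 1) f * f.natDegree

/- The Möbius function on `F_q[T]`: `μ(d) = (−1)^k` if `d = c·P_1⋯P_k` with `c ≠ 0` and
`P_1, …, P_k` distinct monic irreducibles (equivalently, `d` is nonzero and squarefree,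
`k` being its number of distinct monic irreducible divisors), and `μ(d) = 0` otherwise. -/
open Classical in
noncomputable def polyMu {F : Type*} [Field F] (d : F[X]) : ℤ :=
  if d ≠ 0 ∧ Squarefree d then
    (-1) ^ ({P : F[X] | P.Monic ∧ Irreducible P ∧ P ∣ d}.ncard)
  else 0


theorem pvm_finite {F : Type*} [Field F] {f : F[X]} (hf : f ≠ 0) :
    {d : F[X] | d.Monic ∧ d ∣ f}.Finite := by
  classical
  refine Set.Finite.subset (s := ((UniqueFactorizationMonoid.normalizedFactors f).powerset.toFinset.image
    Multiset.prod : Finset F[X])) (Finset.finite_toSet _) ?_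
  rintro d ⟨hd, hdf⟩
  simp only [Finset.coe_image, Set.mem_image, Finset.mem_coe, Multiset.mem_toFinset,
    Multiset.mem_powerset]
  refine ⟨UniqueFactorizationMonoid.normalizedFactors d, ?_, ?_⟩
  · exact (UniqueFactorizationMonoid.dvd_iff_normalizedFactors_le_normalizedFactors
      hd.ne_zero hf).1 hdf
  · have := UniqueFactorizationMonoid.prod_normalizedFactors_eq hd.ne_zero
    rw [this, hd.normalize_eq_self]

open Classical in
noncomputable def pvmD {F : Type*} [Field F] (f : F[X]) : Finset F[X] :=
  if hf : f ≠ 0 then (pvm_finite hf).toFinset else ∅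

theorem mem_pvmD {F : Type*} [Field F] {f d : F[X]} (hf : f ≠ 0) :
    d ∈ pvmD f ↔ d.Monic ∧ d ∣ f := by
  simp [pvmD, hf]

theorem pvm_finsum {F : Type*} [Field F] {M : Type*} [AddCommMonoid M] {f : F[X]} (hf : f ≠ 0)
    (g : F[X] → M) : ∑ᶠ d ∈ {d : F[X] | d.Monic ∧ d ∣ f}, g d = ∑ d ∈ pvmD f, g d := by
  rw [finsum_mem_eq_finite_toFinset_sum _ (pvm_finite hf)]
  simp [pvmD, hf]

theorem pvm_div_mul {F : Type*} [Field F] {f d : F[X]} (h : d ∣ f) : d * (f / d) = f := by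
  by_cases hd : d = 0
  · subst hd
    simpa using (zero_dvd_iff.1 h).symm
  · obtain ⟨e, rfl⟩ := h
    rw [mul_div_cancel_left₀ _ hd]

theorem pvm_div_ne {F : Type*} [Field F] {f d : F[X]} (hf : f ≠ 0) (h : d ∣ f) : f / d ≠ 0 := by
  intro h0
  have := pvm_div_mul h
  rw [h0, mul_zero] at this
  exact hf this.symm

theorem pvm_dvd_div {F : Type*} [Field F] {f d e : F[X]} (hd : d.Monic) (h : d ∣ f) :
    e ∣ f / d ↔ d * e ∣ f := by
  conv_rhs => rw [← pvm_div_mul h]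
  exact (mul_dvd_mul_iff_left hd.ne_zero).symm

theorem pvm_swap {F : Type*} [Field F] {f : F[X]} (hf : f ≠ 0) (G : F[X] → F[X] → ℤ) :
    ∑ d ∈ pvmD f, ∑ e ∈ pvmD (f / d), G d e = ∑ e ∈ pvmD f, ∑ d ∈ pvmD (f / e), G d e := by
  apply Finset.sum_comm'
  intro d e
  constructor
  · rintro ⟨h1, h2⟩
    rw [mem_pvmD hf] at h1
    rw [mem_pvmD (pvm_div_ne hf h1.2), pvm_dvd_div h1.1 h1.2] at h2
    have he : e ∣ f := (Dvd.intro_left d rfl).trans h2.2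
    rw [mem_pvmD hf, mem_pvmD (pvm_div_ne hf he), pvm_dvd_div h2.1 he, mul_comm e d]
    exact ⟨⟨h1.1, h2.2⟩, h2.1, he⟩
  · rintro ⟨h2, h1⟩
    rw [mem_pvmD hf] at h1
    rw [mem_pvmD (pvm_div_ne hf h1.2), pvm_dvd_div h1.1 h1.2] at h2
    have he : d ∣ f := (Dvd.intro_left e rfl).trans h2.2
    rw [mem_pvmD hf, mem_pvmD (pvm_div_ne hf he), pvm_dvd_div h2.1 he, mul_comm d e]
    exact ⟨⟨h2.1, he⟩, h1.1, h2.2⟩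

theorem pvm_conv {F : Type*} [Field F] {f : F[X]} (hf : f ≠ 0) (G : F[X] → F[X] → ℤ) :
    ∑ e ∈ pvmD f, ∑ d ∈ pvmD e, G d (e / d) = ∑ d ∈ pvmD f, ∑ e ∈ pvmD (f / d), G d e := by
  rw [Finset.sum_sigma', Finset.sum_sigma']
  refine Finset.sum_bij' (fun x _ => ⟨x.2, x.1 / x.2⟩) (fun x _ => ⟨x.1 * x.2, x.1⟩) ?_ ?_ ?_ ?_ ?_
  · rintro ⟨e, d⟩ h
    simp only [Finset.mem_sigma] at h ⊢
    obtain ⟨h1, h2⟩ := h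
    rw [mem_pvmD hf] at h1
    rw [mem_pvmD h1.1.ne_zero] at h2
    have hd := h2.2.trans h1.2
    rw [mem_pvmD hf, mem_pvmD (pvm_div_ne hf hd), pvm_dvd_div h2.1 hd, pvm_div_mul h2.2]
    refine ⟨⟨h2.1, hd⟩, ?_, h1.2⟩
    apply Monic.of_mul_monic_left h2.1
    rw [pvm_div_mul h2.2]; exact h1.1
  · rintro ⟨d, e⟩ h
    simp only [Finset.mem_sigma] at h ⊢
    obtain ⟨h1, h2⟩ := h
    rw [mem_pvmD hf] at h1
    rw [mem_pvmD (pvm_div_ne hf h1.2), pvm_dvd_div h1.1 h1.2] at h2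
    rw [mem_pvmD hf, mem_pvmD (h1.1.mul h2.1).ne_zero]
    exact ⟨⟨h1.1.mul h2.1, h2.2⟩, h1.1, Dvd.intro _ rfl⟩
  · rintro ⟨e, d⟩ h
    simp only [Finset.mem_sigma] at h ⊢
    obtain ⟨h1, h2⟩ := h
    rw [mem_pvmD hf] at h1
    rw [mem_pvmD h1.1.ne_zero] at h2
    simp [pvm_div_mul h2.2]
  · rintro ⟨d, e⟩ h
    simp only [Finset.mem_sigma] at h ⊢
    obtain ⟨h1, h2⟩ := h
    rw [mem_pvmD hf] at h1
    simp [mul_div_cancel_left₀ _ h1.1.ne_zero]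
  · intros; rfl

theorem pvm_eq_of_dvd {F : Type*} [Field F] {P Q : F[X]} (hP : P.Monic) (hPi : Irreducible P)
    (hQ : Q.Monic) (hQi : Irreducible Q) (h : P ∣ Q) : P = Q :=
  eq_of_monic_of_associated hP hQ (hPi.associated_of_dvd hQi h)

theorem polyVM_pow {F : Type*} [Field F] {P : F[X]} {c : F} {k : ℕ} (hc : c ≠ 0)
    (hP : P.Monic) (hPi : Irreducible P) (hk : 1 ≤ k) : polyVM (C c * P ^ k) = P.natDegree := by
  have : {m : ℕ | ∃ (c' : F) (Q : F[X]) (l : ℕ),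
    c' ≠ 0 ∧ Q.Monic ∧ Irreducible Q ∧ 1 ≤ l ∧ C c * P ^ k = C c' * Q ^ l ∧ m = Q.natDegree}
      = {P.natDegree} := by
    ext m
    simp only [Set.mem_ofPred_eq, Set.mem_singleton_iff]
    constructor
    · rintro ⟨c', Q, l, hc', hQ, hQi, hl, he, rfl⟩
      have h1 : P ∣ C c' * Q ^ l := by
        rw [← he]
        exact Dvd.dvd.mul_left (dvd_pow_self P (by omega)) _
      have hu : IsUnit (C c') := isUnit_C.2 hc'.isUnit
      have h2 : P ∣ Q ^ l := (hu.dvd_mul_left).1 h1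
      have h3 := hPi.prime.dvd_of_dvd_pow h2
      rw [pvm_eq_of_dvd hP hPi hQ hQi h3]
    · rintro rfl
      exact ⟨c, P, k, hc, hP, hPi, hk, rfl, rfl⟩
  unfold polyVM
  rw [this]; simp

theorem polyVM_ne {F : Type*} [Field F] {f : F[X]} (h : polyVM f ≠ 0) :
    ∃ (c : F) (P : F[X]) (k : ℕ), c ≠ 0 ∧ P.Monic ∧ Irreducible P ∧ 1 ≤ k ∧ f = C c * P ^ k := by
  by_contra hcon
  apply h
  unfold polyVM
  refine (congrArg sSup (?_ : _ = (∅ : Set ℕ))).trans csSup_empty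
  simp only [Set.eq_empty_iff_forall_notMem, Set.mem_ofPred_eq]
  rintro m ⟨c, P, k, h1, h2, h3, h4, h5, -⟩
  exact hcon ⟨c, P, k, h1, h2, h3, h4, h5⟩

theorem polyVM_C_mul {F : Type*} [Field F] {f : F[X]} {c : F} (hc : c ≠ 0) :
    polyVM (C c * f) = polyVM f := by
  unfold polyVM
  congr 1
  ext m
  simp only [Set.mem_ofPred_eq]
  constructor
  · rintro ⟨c', Q, l, hc', hQ, hQi, hl, he, rfl⟩
    refine ⟨c⁻¹ * c', Q, l, by positivity, hQ, hQi, hl, ?_, rfl⟩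
    rw [C_mul, mul_assoc, ← he, ← mul_assoc, ← C_mul, inv_mul_cancel₀ hc]; simp
  · rintro ⟨c', Q, l, hc', hQ, hQi, hl, he, rfl⟩
    refine ⟨c * c', Q, l, by positivity, hQ, hQi, hl, ?_, rfl⟩
    rw [C_mul, mul_assoc, ← he]

theorem pvm_exists {F : Type*} [Field F] {f : F[X]} (hd : f.natDegree ≠ 0) :
    ∃ P : F[X], P.Monic ∧ Irreducible P ∧ P ∣ f := by
  have := exists_monic_irreducible_factor f (fun h => hd (natDegree_eq_zero_of_isUnit h))
  obtain ⟨P, h1, h2, h3⟩ := this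
  exact ⟨P, h1, h2, h3⟩

theorem pvmD_const {F : Type*} [Field F] {f : F[X]} (hf : f ≠ 0) (hd : f.natDegree = 0) :
    pvmD f = {1} := by
  ext d
  rw [mem_pvmD hf, Finset.mem_singleton]
  constructor
  · rintro ⟨h1, h2⟩
    have := natDegree_le_of_dvd h2 hf
    exact h1.natDegree_eq_zero.1 (by omega)
  · rintro rfl
    exact ⟨monic_one, one_dvd _⟩

theorem polyVM_const {F : Type*} [Field F] {f : F[X]} (hd : f.natDegree = 0) :
    polyVM f = 0 := by
  by_contra h
  obtain ⟨c, P, k, hc, hP, hPi, hk, rfl⟩ := polyVM_ne h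
  rw [natDegree_C_mul hc, natDegree_pow] at hd
  have := hPi.natDegree_pos
  rcases Nat.mul_eq_zero.1 hd with h | h <;> omega

theorem sum_polyVM {F : Type*} [Field F] (n : ℕ) : ∀ (f : F[X]), f ≠ 0 → f.natDegree = n →
    ∑ d ∈ pvmD f, (polyVM d : ℤ) = f.natDegree := by
  classical
  induction n using Nat.strong_induction_on with
  | _ n ih =>
  intro f hf hn
  by_cases hd : f.natDegree = 0
  · rw [pvmD_const hf hd, Finset.sum_singleton, polyVM_const (by simp), hd]
  obtain ⟨P, hP, hPi, g, rfl⟩ := pvm_exists hd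
  have hg : g ≠ 0 := right_ne_zero_of_mul hf
  have hdeg : (P * g).natDegree = P.natDegree + g.natDegree := natDegree_mul hP.ne_zero hg
  have hpos := hPi.natDegree_pos
  have hsub : pvmD g ⊆ pvmD (P * g) := by
    intro d hd
    rw [mem_pvmD hg] at hd
    rw [mem_pvmD hf]
    exact ⟨hd.1, hd.2.mul_left _⟩
  rw [← Finset.sum_sdiff hsub, ih g.natDegree (by omega) g hg rfl, hdeg]
  push_cast
  congr 1
  obtain ⟨v, u, hu, rfl⟩ := WfDvdMonoid.max_power_factor hg hPi
  have hVP : polyVM (P ^ (v + 1)) = P.natDegree := by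
    have := polyVM_pow (one_ne_zero) hP hPi (Nat.le_add_left 1 v)
    simpa using this
  rw [Finset.sum_eq_single (P ^ (v + 1)), hVP]
  · intro d hd hne
    by_contra h0
    obtain ⟨c, Q, k, hc, hQ, hQi, hk, hdQ⟩ := polyVM_ne (by exact_mod_cast h0)
    rw [Finset.mem_sdiff, mem_pvmD hf, mem_pvmD hg] at hd
    obtain ⟨⟨hdm, hdd⟩, hdn⟩ := hd
    have hc1 : c = 1 := by
      have := hdm.leadingCoeff
      rw [hdQ] at this
      simpa [hQ.leadingCoeff] using this
    subst hc1
    simp only [map_one, one_mul] at hdQ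
    subst hdQ
    by_cases hQP : Q = P
    · subst hQP
      rw [← mul_assoc, ← pow_succ'] at hdd
      have h1 : ¬ k ≤ v := fun hle => hdn ⟨hdm, (pow_dvd_pow Q hle).mul_right u⟩
      have h2 : k ≤ v + 1 := by
        by_contra hlt
        have h3 : Q ^ (v + 1) * Q ∣ Q ^ (v + 1) * u :=
          (by rw [← pow_succ]; exact (pow_dvd_pow Q (by omega)) : Q ^ (v + 1) * Q ∣ Q ^ k).trans hdd
        exact hu ((mul_dvd_mul_iff_left (pow_ne_zero _ hQ.ne_zero)).1 h3)
      exact hne (by rw [show k = v + 1 by omega])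
    · apply hdn
      refine ⟨hdm, ?_⟩
      have hcop : IsCoprime Q P := by
        rw [hQi.coprime_iff_not_dvd]
        exact fun h => hQP (pvm_eq_of_dvd hQ hQi hP hPi h)
      exact (hcop.pow_left).dvd_of_dvd_mul_left hdd
  · intro h
    exfalso
    apply h
    rw [Finset.mem_sdiff, mem_pvmD hf, mem_pvmD hg]
    refine ⟨⟨hP.pow _, ?_⟩, ?_⟩
    · rw [← mul_assoc, ← pow_succ']; exact Dvd.intro _ rfl
    · rintro ⟨-, h⟩
      rw [pow_succ] at h
      exact hu ((mul_dvd_mul_iff_left (pow_ne_zero _ hP.ne_zero)).1 h)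

theorem polyMu_mul {F : Type*} [Field F] {P d : F[X]} (hP : P.Monic) (hPi : Irreducible P)
    (hd : Squarefree d) (hd0 : d ≠ 0) (h : ¬ P ∣ d) :
    Squarefree (P * d) ∧ polyMu (P * d) = - polyMu d := by
  have hcop : IsCoprime P d := (hPi.coprime_iff_not_dvd).2 h
  have hsq : Squarefree (P * d) := (squarefree_mul_iff).2 ⟨hcop.isRelPrime, hPi.squarefree, hd⟩
  refine ⟨hsq, ?_⟩
  unfold polyMu
  rw [if_pos ⟨mul_ne_zero hP.ne_zero hd0, hsq⟩, if_pos ⟨hd0, hd⟩]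
  have : {Q : F[X] | Q.Monic ∧ Irreducible Q ∧ Q ∣ P * d}
      = insert P {Q : F[X] | Q.Monic ∧ Irreducible Q ∧ Q ∣ d} := by
    ext Q
    simp only [Set.mem_ofPred_eq, Set.mem_insert_iff]
    constructor
    · rintro ⟨h1, h2, h3⟩
      rcases h2.prime.dvd_or_dvd h3 with h4 | h4
      · exact Or.inl (pvm_eq_of_dvd h1 h2 hP hPi h4)
      · exact Or.inr ⟨h1, h2, h4⟩
    · rintro (rfl | ⟨h1, h2, h3⟩)
      · exact ⟨hP, hPi, Dvd.intro _ rfl⟩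
      · exact ⟨h1, h2, h3.mul_left _⟩
  rw [this, Set.ncard_insert_of_notMem (fun hh => h hh.2.2)
    ((pvm_finite hd0).subset fun Q hQ => ⟨hQ.1, hQ.2.2⟩), pow_succ]
  ring

theorem sum_polyMu {F : Type*} [Field F] {f : F[X]} (hf : f ≠ 0) :
    ∑ d ∈ pvmD f, polyMu d = if f.natDegree = 0 then 1 else 0 := by
  classical
  split_ifs with hd
  · rw [pvmD_const hf hd, Finset.sum_singleton]
    unfold polyMu
    rw [if_pos ⟨one_ne_zero, squarefree_one⟩]
    have : {P : F[X] | P.Monic ∧ Irreducible P ∧ P ∣ 1} = ∅ := by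
      ext P
      simp only [Set.mem_ofPred_eq, Set.mem_empty_iff_false, iff_false]
      rintro ⟨-, h1, h2⟩
      exact h1.not_isUnit (isUnit_of_dvd_one h2)
    rw [this]; simp
  obtain ⟨P, hP, hPi, hPf⟩ := pvm_exists hd
  have h0 : ∑ d ∈ (pvmD f).filter Squarefree, polyMu d = ∑ d ∈ pvmD f, polyMu d := by
    apply Finset.sum_filter_of_ne
    intro d _ hne
    by_contra hs
    apply hne
    unfold polyMu
    rw [if_neg (fun h => hs h.2)]
  rw [← h0]
  have key : ∀ d ∈ (pvmD f).filter Squarefree, P ∣ d →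
      ¬ P ∣ d / P ∧ d / P ∈ (pvmD f).filter Squarefree := by
    intro d hd hPd
    rw [Finset.mem_filter, mem_pvmD hf] at hd
    obtain ⟨⟨hm, hdf⟩, hs⟩ := hd
    obtain ⟨e, rfl⟩ := hPd
    rw [mul_div_cancel_left₀ _ hP.ne_zero, Finset.mem_filter, mem_pvmD hf]
    refine ⟨?_, ⟨hP.of_mul_monic_left hm, (Dvd.intro_left _ rfl).trans hdf⟩,
      hs.squarefree_of_dvd (Dvd.intro_left _ rfl)⟩
    intro h
    exact hPi.not_isUnit (hs P (mul_dvd_mul_left P h))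
  refine Finset.sum_involution (fun d _ => if P ∣ d then d / P else P * d) ?_ ?_ ?_ ?_
  · intro d hd
    split_ifs with h
    · obtain ⟨h1, h2⟩ := key d hd h
      rw [Finset.mem_filter, mem_pvmD hf] at h2
      have := (polyMu_mul hP hPi h2.2 h2.1.1.ne_zero h1).2
      rw [pvm_div_mul h] at this
      rw [this]; ring
    · rw [Finset.mem_filter, mem_pvmD hf] at hd
      rw [(polyMu_mul hP hPi hd.2 hd.1.1.ne_zero h).2]; ring
  · intro d hd _
    split_ifs with h
    · intro he
      have := (key d hd h).1
      rw [he] at this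
      exact this h
    · intro he
      exact h (he ▸ Dvd.intro _ rfl)
  · intro d hd
    split_ifs with h
    · exact (key d hd h).2
    · rw [Finset.mem_filter, mem_pvmD hf] at hd ⊢
      refine ⟨⟨hP.mul hd.1.1, ?_⟩, (polyMu_mul hP hPi hd.2 hd.1.1.ne_zero h).1⟩
      exact ((hPi.coprime_iff_not_dvd).2 h).mul_dvd hPf hd.1.2
  · intro d hd
    by_cases h : P ∣ d
    · rw [if_pos h, if_neg (key d hd h).1, pvm_div_mul h]
    · rw [if_neg h, if_pos (Dvd.intro _ rfl), mul_div_cancel_left₀ _ hP.ne_zero]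

theorem polyVMJ_step {F : Type*} [Field F] (j : ℕ) {f : F[X]} (hf : f ≠ 0) :
    (polyVMJ (j + 2) f : ℤ) = (∑ d ∈ pvmD f, (polyVMJ (j + 1) d : ℤ) * polyVM (f / d))
      + polyVMJ (j + 1) f * f.natDegree := by
  rw [polyVMJ]
  dsimp only
  rw [pvm_finsum hf]
  push_cast
  rfl

theorem pvmD_C_mul {F : Type*} [Field F] {f : F[X]} (hf : f ≠ 0) {c : F} (hc : c ≠ 0) :
    pvmD (C c * f) = pvmD f := by
  ext d
  rw [mem_pvmD hf, mem_pvmD (mul_ne_zero (by simpa using hc) hf),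
    (isUnit_C.2 hc.isUnit : IsUnit (C c)).dvd_mul_left]

theorem polyVMJ_C_mul {F : Type*} [Field F] (j : ℕ) {f : F[X]} (hf : f ≠ 0) {c : F} (hc : c ≠ 0) :
    polyVMJ (j + 1) (C c * f) = polyVMJ (j + 1) f := by
  induction j with
  | zero => simpa [polyVMJ] using polyVM_C_mul hc
  | succ j ih =>
    have : ((polyVMJ (j + 2) (C c * f) : ℕ) : ℤ) = polyVMJ (j + 2) f := by
      rw [polyVMJ_step j hf, polyVMJ_step j (mul_ne_zero (by simpa using hc) hf), ih,
        pvmD_C_mul hf hc, natDegree_C_mul hc]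
      congr 1
      apply Finset.sum_congr rfl
      intro d hd
      rw [mem_pvmD hf] at hd
      obtain ⟨hd1, e, rfl⟩ := hd
      rw [mul_div_cancel_left₀ _ hd1.ne_zero, mul_left_comm, mul_div_cancel_left₀ _ hd1.ne_zero,
        polyVM_C_mul hc]
    exact_mod_cast this

theorem pvm_deg {F : Type*} [Field F] {f d : F[X]} (hf : f ≠ 0) (h : d ∣ f) :
    d.natDegree + (f / d).natDegree = f.natDegree := by
  rw [← natDegree_mul (ne_zero_of_dvd_ne_zero hf h) (pvm_div_ne hf h), pvm_div_mul h]

theorem sum_polyVMJ {F : Type*} [Field F] (j : ℕ) {f : F[X]} (hf : f ≠ 0) :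
    ∑ d ∈ pvmD f, (polyVMJ (j + 1) d : ℤ) = (f.natDegree : ℤ) ^ (j + 1) := by
  induction j with
  | zero => simpa [polyVMJ] using sum_polyVM _ f hf rfl
  | succ j ih =>
    have h1 : ∑ d ∈ pvmD f, (polyVMJ (j + 2) d : ℤ) = ∑ e ∈ pvmD f,
      ((∑ d ∈ pvmD e, (polyVMJ (j + 1) d : ℤ) * polyVM (e / d))
        + polyVMJ (j + 1) e * e.natDegree) := by
      apply Finset.sum_congr rfl
      intro e he
      rw [mem_pvmD hf] at he
      rw [polyVMJ_step j he.1.ne_zero]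
    rw [h1, Finset.sum_add_distrib, pvm_conv hf (fun d e => (polyVMJ (j + 1) d : ℤ) * polyVM e),
      ← Finset.sum_add_distrib, pow_succ, ← ih, Finset.sum_mul]
    apply Finset.sum_congr rfl
    intro d hd
    rw [mem_pvmD hf] at hd
    rw [← Finset.mul_sum, sum_polyVM _ _ (pvm_div_ne hf hd.2) rfl, ← pvm_deg hf hd.2]
    push_cast
    ring

/-- Equation (1.7) of Rodgers, "The covariance of almost-primes in F_q[T]":
`Λ_j(f) = Σ'_{d ∣ f} μ(d) (deg(f/d))^j`, the sum over monic divisors `d` of `f`. -/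
theorem vonMangoldt_eq_sum_moebius_mul_deg_pow {F : Type*} [Field F]
    (j : ℕ) (hj : 1 ≤ j) (f : F[X]) (hf : f ≠ 0) :
    (polyVMJ j f : ℤ)
      = ∑ᶠ d ∈ {d : F[X] | d.Monic ∧ d ∣ f}, polyMu d * ((f / d).natDegree : ℤ) ^ j := by
  obtain ⟨j, rfl⟩ := Nat.exists_eq_add_of_le' hj
  rw [pvm_finsum hf]
  have h1 : ∑ d ∈ pvmD f, polyMu d * ((f / d).natDegree : ℤ) ^ (j + 1)
      = ∑ d ∈ pvmD f, ∑ e ∈ pvmD (f / d), polyMu d * (polyVMJ (j + 1) e : ℤ) := by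
    apply Finset.sum_congr rfl
    intro d hd
    rw [mem_pvmD hf] at hd
    rw [← Finset.mul_sum, sum_polyVMJ j (pvm_div_ne hf hd.2)]
  rw [h1, pvm_swap hf]
  have hlc : f.leadingCoeff ≠ 0 := leadingCoeff_ne_zero.2 hf
  have hfm : f = C f.leadingCoeff * (f * C f.leadingCoeff⁻¹) := by
    rw [mul_left_comm, ← C_mul, mul_inv_cancel₀ hlc]; simp
  have hmon : (f * C f.leadingCoeff⁻¹).Monic := monic_mul_leadingCoeff_inv hf
  set m := f * C f.leadingCoeff⁻¹ with hm
  have hmf : m ∣ f := Dvd.intro_left _ hfm.symm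
  have hdm : f.natDegree = m.natDegree := by
    conv_lhs => rw [hfm]
    exact natDegree_C_mul hlc
  rw [Finset.sum_eq_single m]
  · rw [← Finset.sum_mul, sum_polyMu (pvm_div_ne hf hmf), if_pos, one_mul]
    · conv_lhs => rw [hfm]
      rw [polyVMJ_C_mul j hmon.ne_zero hlc]
    · have := pvm_deg hf hmf
      omega
  · intro e he hne
    rw [mem_pvmD hf] at he
    rw [← Finset.sum_mul, sum_polyMu (pvm_div_ne hf he.2), if_neg, zero_mul]
    intro h0
    have h2 := pvm_deg hf he.2
    apply hne
    have h3 : e ∣ m := by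
      have := he.2
      rw [hfm] at this
      exact ((isUnit_C.2 hlc.isUnit : IsUnit (C f.leadingCoeff)).dvd_mul_left).1 this
    exact eq_of_monic_of_dvd_of_natDegree_le he.1 hmon h3 (by omega)  |>.symm
  · intro h
    exact absurd ((mem_pvmD hf).2 ⟨hmon, hmf⟩) h
end

section
/- For every finite field F_q with q elements and all integers j ≥ 1 and n ≥ 1: Σ_{f ∈ M_n} Λ_j(f) = q^n · (n^j − (n−1)^j). -/
open Polynomial

section helpers

variable {F : Type*} [Field F]

lemma vm_pow {P : F[X]} (hP : P.Monic) (hi : Irreducible P) {k : ℕ} (hk : 1 ≤ k) :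
    polyVM (P ^ k) = P.natDegree := by
  have : {m : ℕ | ∃ (c : F) (Q : F[X]) (l : ℕ),
    c ≠ 0 ∧ Q.Monic ∧ Irreducible Q ∧ 1 ≤ l ∧ P ^ k = C c * Q ^ l ∧ m = Q.natDegree}
      = {P.natDegree} := by
    ext m
    simp only [Set.mem_ofPred_eq, Set.mem_singleton_iff]
    constructor
    · rintro ⟨c, Q, l, hc, hQ, hQi, hl, h, rfl⟩
      have h1 : P ∣ C c * Q ^ l := h ▸ dvd_pow_self P (by omega)
      have h2 : P ∣ Q := by
        rcases hi.prime.dvd_or_dvd h1 with h2 | h2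
        · exact absurd (isUnit_of_dvd_unit h2 (isUnit_C.2 hc.isUnit)) hi.not_isUnit
        · exact hi.prime.dvd_of_dvd_pow h2
      rw [eq_of_monic_of_associated hP hQ (hi.associated_of_dvd hQi h2)]
    · rintro rfl
      exact ⟨1, P, k, one_ne_zero, hP, hi, hk, by simp, rfl⟩
  unfold polyVM
  rw [this]
  exact csSup_singleton _

lemma vm_ne_zero {f : F[X]} (hf : f.Monic) (h : polyVM f ≠ 0) :
    ∃ (P : F[X]) (k : ℕ), P.Monic ∧ Irreducible P ∧ 1 ≤ k ∧ f = P ^ k := by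
  by_contra hcon
  apply h
  unfold polyVM
  refine (congrArg sSup (Set.eq_empty_of_forall_notMem ?_)).trans csSup_empty
  intro m
  rintro ⟨c, P, k, hc, hP, hPi, hk, rfl, -⟩
  apply hcon
  refine ⟨P, k, hP, hPi, hk, ?_⟩
  have : (C c * P ^ k).leadingCoeff = 1 := hf
  rw [leadingCoeff_mul, leadingCoeff_C, (hP.pow k).leadingCoeff, mul_one] at this
  simp [this]

lemma vm_one : polyVM (1 : F[X]) = 0 := by
  by_contra h
  obtain ⟨P, k, hP, hi, hk, h1⟩ := vm_ne_zero monic_one h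
  exact hi.not_isUnit (isUnit_of_dvd_one (h1 ▸ dvd_pow_self P (by omega)))

variable [Fintype F]

noncomputable def mEquiv (n : ℕ) : {f : F[X] | f.Monic ∧ f.natDegree = n} ≃ (Fin n → F) :=
  (monicEquivDegreeLT n).trans (degreeLTEquiv F n).toEquiv

lemma finM (n : ℕ) : {f : F[X] | f.Monic ∧ f.natDegree = n}.Finite :=
  Set.finite_coe_iff.mp (Finite.of_equiv _ (mEquiv n).symm)

variable (F) in
noncomputable def MM (n : ℕ) : Finset F[X] := (finM n).toFinset

lemma mem_MM {n : ℕ} {f : F[X]} : f ∈ MM F n ↔ f.Monic ∧ f.natDegree = n := by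
  simp [MM]

lemma card_MM (n : ℕ) : (MM F n).card = Fintype.card F ^ n := by
  rw [MM, ← Set.ncard_eq_toFinset_card _ (finM n)]
  rw [← Nat.card_coe_set_eq, Nat.card_congr (mEquiv n)]
  simp

open Classical in
noncomputable def DD (f : F[X]) : Finset F[X] :=
  ((Finset.range (f.natDegree + 1)).biUnion (MM F)).filter (· ∣ f)

lemma mem_DD {f d : F[X]} (hf : f.Monic) : d ∈ DD f ↔ d.Monic ∧ d ∣ f := by
  simp only [DD, Finset.mem_filter, Finset.mem_biUnion, Finset.mem_range, mem_MM]
  constructor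
  · rintro ⟨⟨a, _, h, _⟩, h2⟩
    exact ⟨h, h2⟩
  · rintro ⟨h, h2⟩
    exact ⟨⟨_, Nat.lt_succ_of_le (natDegree_le_of_dvd h2 hf.ne_zero), h, rfl⟩, h2⟩

lemma conv (n : ℕ) (g h : F[X] → ℕ) :
    ∑ f ∈ MM F n, ∑ d ∈ DD f, g d * h (f / d) =
      ∑ p ∈ Finset.HasAntidiagonal.antidiagonal n, (∑ d ∈ MM F p.1, g d) * (∑ e ∈ MM F p.2, h e) := by
  simp_rw [Finset.sum_mul_sum, ← Finset.sum_product']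
  rw [Finset.sum_sigma', Finset.sum_sigma']
  refine Finset.sum_bij'
    (fun x _ => ⟨(x.2.natDegree, (x.1 / x.2).natDegree), (x.2, x.1 / x.2)⟩)
    (fun y _ => ⟨y.2.1 * y.2.2, y.2.1⟩) ?_ ?_ ?_ ?_ ?_
  · rintro ⟨f, d⟩ hx
    simp only [Finset.mem_sigma, mem_MM] at hx
    obtain ⟨⟨hf, hn⟩, hd0⟩ := hx
    obtain ⟨hd, e, rfl⟩ := (mem_DD hf).1 hd0
    have he := hd.of_mul_monic_left hf
    simp only [Finset.mem_sigma, Finset.HasAntidiagonal.mem_antidiagonal, Finset.mem_product, mem_MM,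
      mul_div_cancel_left₀ e hd.ne_zero]
    rw [hd.natDegree_mul he] at hn
    simp [hn, hd, he]
  · rintro ⟨⟨a, b⟩, d, e⟩ hy
    simp only [Finset.mem_sigma, Finset.HasAntidiagonal.mem_antidiagonal, Finset.mem_product, mem_MM] at hy ⊢
    obtain ⟨hn, ⟨hd, rfl⟩, he, rfl⟩ := hy
    refine ⟨⟨hd.mul he, by rw [hd.natDegree_mul he, hn]⟩, ?_⟩
    exact (mem_DD (hd.mul he)).2 ⟨hd, dvd_mul_right _ _⟩
  · rintro ⟨f, d⟩ hx
    simp only [Finset.mem_sigma, mem_MM] at hx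
    obtain ⟨⟨hf, hn⟩, hd0⟩ := hx
    obtain ⟨hd, e, rfl⟩ := (mem_DD hf).1 hd0
    simp only [mul_div_cancel_left₀ e hd.ne_zero]
  · rintro ⟨⟨a, b⟩, d, e⟩ hy
    simp only [Finset.mem_sigma, Finset.HasAntidiagonal.mem_antidiagonal, Finset.mem_product, mem_MM] at hy ⊢
    obtain ⟨hn, ⟨hd, rfl⟩, he, rfl⟩ := hy
    simp only [mul_div_cancel_left₀ e hd.ne_zero]
  · rintro ⟨f, d⟩ hx
    rfl

lemma sum_DD_vm (n : ℕ) : ∀ f : F[X], f.Monic → f.natDegree = n →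
    ∑ d ∈ DD f, polyVM d = n := by
  classical
  induction n using Nat.strong_induction_on with
  | _ n ih =>
  intro f hf hn
  by_cases hu : IsUnit f
  · have h1 : f = 1 := hf.eq_one_of_isUnit hu
    subst h1
    rw [natDegree_one] at hn
    subst hn
    apply Finset.sum_eq_zero
    intro d hd
    obtain ⟨hd, hd2⟩ := (mem_DD hf).1 hd
    rw [hd.eq_one_of_isUnit (isUnit_of_dvd_one hd2), vm_one]
  obtain ⟨P, hP, hi, g, rfl⟩ : ∃ P : F[X], P.Monic ∧ Irreducible P ∧ P ∣ f := by
    obtain ⟨P, hi, hP, h⟩ := exists_monic_irreducible_factor f hu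
    exact ⟨P, by assumption, by assumption, h⟩
  have hg : g.Monic := hP.of_mul_monic_left hf
  have hpos := hi.natDegree_pos
  rw [hP.natDegree_mul hg] at hn
  have ihg := ih g.natDegree (by omega) g hg rfl
  have hsub : DD g ⊆ DD (P * g) := by
    intro d hd
    rw [mem_DD hg] at hd
    exact (mem_DD hf).2 ⟨hd.1, hd.2.mul_left P⟩
  obtain ⟨c, hc, hPc⟩ := (FiniteMultiplicity.of_not_isUnit hi.not_isUnit
    hg.ne_zero).exists_eq_pow_mul_and_not_dvd
  set v := multiplicity P g
  rw [← Finset.sum_sdiff hsub, ihg]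
  rw [Finset.sum_eq_single (P ^ (v + 1)), vm_pow hP hi (by omega), hn]
  · intro d hd hne
    rw [Finset.mem_sdiff, mem_DD hf, mem_DD hg] at hd
    obtain ⟨⟨hdm, hdvd⟩, hnd⟩ := hd
    by_contra h0
    obtain ⟨Q, k, hQ, hQi, hk, rfl⟩ := vm_ne_zero hdm h0
    apply hnd
    refine ⟨hdm, ?_⟩
    by_cases hQP : Q = P
    · subst hQP
      rcases lt_trichotomy k (v + 1) with hlt | rfl | hgt
      · rw [hc]
        exact (pow_dvd_pow Q (by omega)).mul_right c
      · exact absurd rfl hne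
      · exfalso
        have h2 : Q ^ (v + 1) * Q ∣ Q ^ (v + 1) * c := by
          rw [← pow_succ]
          refine (pow_dvd_pow Q (by omega : v + 1 + 1 ≤ k)).trans ?_
          refine hdvd.trans ?_
          conv_lhs => rw [hc]
          rw [pow_succ' Q v, mul_assoc]
        exact hPc ((mul_dvd_mul_iff_left (hQ.pow _).ne_zero).1 h2)
    · have hcop : IsCoprime Q P := by
        rcases EuclideanDomain.dvd_or_coprime Q P hQi with h | h
        · exact absurd (eq_of_monic_of_associated hQ hP (hQi.associated_of_dvd hi h)) hQP
        · exact h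
      exact (hcop.pow_left).dvd_of_dvd_mul_left hdvd
  · intro hne
    exfalso
    apply hne
    rw [Finset.mem_sdiff, mem_DD hf, mem_DD hg]
    refine ⟨⟨hP.pow _, ?_⟩, ?_⟩
    · rw [pow_succ']
      exact mul_dvd_mul_left P ⟨c, hc⟩
    · rintro ⟨-, h⟩
      rw [hc, pow_succ, mul_dvd_mul_iff_left (hP.pow _).ne_zero] at h
      exact hPc h

lemma MM_zero : MM F 0 = {1} := by
  ext f
  rw [mem_MM, Finset.mem_singleton]
  constructor
  · rintro ⟨h, h2⟩
    exact eq_one_of_monic_natDegree_zero h h2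
  · rintro rfl
    exact ⟨monic_one, natDegree_one⟩

lemma S1_zero : ∑ f ∈ MM F 0, polyVM f = 0 := by
  simp [MM_zero, vm_one]

lemma S1 (n : ℕ) : ∑ f ∈ MM F (n + 1), polyVM f = Fintype.card F ^ (n + 1) := by
  induction n using Nat.strong_induction_on with
  | _ n ih =>
  have h := conv (F := F) (n + 1) polyVM (fun _ => 1)
  simp only [mul_one, Finset.sum_const, smul_eq_mul, card_MM] at h
  rw [Finset.sum_congr rfl (fun f hf => sum_DD_vm (n + 1) f (mem_MM.1 hf).1 (mem_MM.1 hf).2),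
    Finset.sum_const, card_MM, smul_eq_mul,
    Finset.Nat.sum_antidiagonal_eq_sum_range_succ_mk, Finset.sum_range_succ,
    Finset.sum_range_succ'] at h
  simp only [S1_zero] at h
  rw [Finset.sum_congr rfl (g := fun _ => Fintype.card F ^ (n + 1))] at h
  · simp at h
    linarith
  · intro i hi
    rw [Finset.mem_range] at hi
    rw [ih i hi, ← pow_add]
    congr 1
    omega

lemma vmj_succ (j : ℕ) {f : F[X]} (hf : f.Monic) : polyVMJ (j + 2) f =
    ∑ d ∈ DD f, polyVMJ (j + 1) d * polyVM (f / d) + polyVMJ (j + 1) f * f.natDegree := by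
  have : {d : F[X] | d.Monic ∧ d ∣ f} = (DD f : Set F[X]) := by
    ext d
    simp [mem_DD hf]
  rw [polyVMJ]
  beta_reduce
  rw [this]
  congr 1
  exact finsum_mem_coe_finset _ _

lemma SJ_succ (j n : ℕ) : ∑ f ∈ MM F n, polyVMJ (j + 2) f =
    ∑ p ∈ Finset.HasAntidiagonal.antidiagonal n,
      (∑ d ∈ MM F p.1, polyVMJ (j + 1) d) * (∑ e ∈ MM F p.2, polyVM e)
      + (∑ f ∈ MM F n, polyVMJ (j + 1) f) * n := by
  rw [← conv, Finset.sum_mul, ← Finset.sum_add_distrib]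
  apply Finset.sum_congr rfl
  intro f hf
  obtain ⟨h1, h2⟩ := mem_MM.1 hf
  rw [vmj_succ j h1, h2]

lemma SJ_zero (j : ℕ) : ∑ f ∈ MM F 0, polyVMJ (j + 1) f = 0 := by
  cases j with
  | zero => simpa [polyVMJ] using S1_zero (F := F)
  | succ j => rw [SJ_succ]; simp [S1_zero]

lemma SJ (j : ℕ) : ∀ n : ℕ, ((∑ f ∈ MM F (n + 1), polyVMJ (j + 1) f : ℕ) : ℤ) =
    (Fintype.card F : ℤ) ^ (n + 1) * (((n : ℤ) + 1) ^ (j + 1) - (n : ℤ) ^ (j + 1)) := by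
  induction j with
  | zero =>
    intro n
    have := S1 (F := F) n
    simp only [polyVMJ, this]
    push_cast
    ring
  | succ j ih =>
    intro n
    rw [SJ_succ, Finset.Nat.sum_antidiagonal_eq_sum_range_succ_mk, Finset.sum_range_succ,
      Finset.sum_range_succ']
    simp only [SJ_zero, Nat.sub_self, S1_zero, mul_zero, zero_mul, add_zero]
    push_cast [-Nat.cast_sum]
    rw [ih]
    have key : ((∑ k ∈ Finset.range n, (∑ d ∈ MM F (k + 1), polyVMJ (j + 1) d) *
        ∑ e ∈ MM F (n + 1 - (k + 1)), polyVM e : ℕ) : ℤ)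
        = (Fintype.card F : ℤ) ^ (n + 1) * (n : ℤ) ^ (j + 1) := by
      rw [Nat.cast_sum]
      have h1 : ∀ k ∈ Finset.range n, (((∑ d ∈ MM F (k + 1), polyVMJ (j + 1) d) *
        ∑ e ∈ MM F (n + 1 - (k + 1)), polyVM e : ℕ) : ℤ) = (Fintype.card F : ℤ) ^ (n + 1) *
          (((k + 1 : ℕ) : ℤ) ^ (j + 1) - (k : ℤ) ^ (j + 1)) := by
        intro k hk
        rw [Finset.mem_range] at hk
        obtain ⟨m, rfl⟩ : ∃ m, n = k + 1 + m := ⟨n - (k + 1), by omega⟩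
        rw [show k + 1 + m + 1 - (k + 1) = m + 1 by omega, S1, Nat.cast_mul, ih]
        push_cast
        ring
      rw [Finset.sum_congr rfl h1, ← Finset.mul_sum,
        Finset.sum_range_sub (fun k : ℕ => (k : ℤ) ^ (j + 1))]
      simp
    simp only [Nat.add_sub_add_right] at key
    rw [key]
    ring

end helpers

/-- Equation (1.10) of Rodgers, "The covariance of almost-primes in F_q[T]":
`Σ_{f ∈ M_n} Λ_j(f) = q^n (n^j − (n−1)^j)`. -/
theorem sum_vonMangoldt_monic_eq {F : Type*} [Field F] [Fintype F]
    (j n : ℕ) (hj : 1 ≤ j) (hn : 1 ≤ n) :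
    (∑ᶠ f ∈ {f : F[X] | f.Monic ∧ f.natDegree = n}, polyVMJ j f)
      = Fintype.card F ^ n * (n ^ j - (n - 1) ^ j) := by
  obtain ⟨j, rfl⟩ : ∃ i, j = i + 1 := ⟨j - 1, by omega⟩
  obtain ⟨n, rfl⟩ : ∃ i, n = i + 1 := ⟨n - 1, by omega⟩
  have hset : {f : F[X] | f.Monic ∧ f.natDegree = n + 1} = (MM F (n + 1) : Set F[X]) := by
    ext d
    simp [mem_MM]
  rw [hset, finsum_mem_coe_finset]
  have h := SJ (F := F) j n
  have hle : n ^ (j + 1) ≤ (n + 1) ^ (j + 1) := Nat.pow_le_pow_left (by omega) _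
  rw [Nat.add_sub_cancel]
  zify [hle]
  rw [← h]
  push_cast
  rfl
end

section
/- Fix N ≥ 1 and work with symmetric polynomials in the variables ω_1, …, ω_N. For all integers j ≥ 1 and r ≥ 1: H_j^{(r)} = Σ_{ν=1}^{min(r,N)} (−1)^ν · (ν^j) · e_ν · h_{r−ν}, where H_j^{(r)} is defined inductively from the power sums as in the context. Equivalently (using e_ν = 0 for ν > N), H_j^{(r)} = Σ_{ν=1}^{r} (−1)^ν ν^j e_ν h_{r−ν}. -/
open MvPolynomial

/- The quantities `H_j^{(n)}` as symmetric polynomials in `ω_1, …, ω_N`: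
`H_1^{(n)} = −p_n` (the power sum) and, for `j ≥ 2`,
`H_j^{(n)} = Σ_{ℓ+λ=n, ℓ,λ≥1} H_1^{(λ)} H_{j−1}^{(ℓ)} + n·H_{j−1}^{(n)}`
(here `H_1^{(λ)} = −p_λ` is inlined in the recursion). -/
noncomputable def symH (N : ℕ) : ℕ → ℕ → MvPolynomial (Fin N) ℤ
  | 0, _ => 0
  | 1, n => -(psum (Fin N) ℤ n)
  | (j + 2), n =>
      (∑ ℓ ∈ Finset.Ico 1 n, (-(psum (Fin N) ℤ (n - ℓ))) * symH N (j + 1) ℓ)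
        + (n : MvPolynomial (Fin N) ℤ) * symH N (j + 1) n


namespace SymHAux

abbrev A (N : ℕ) := MvPolynomial (Fin N) ℤ

noncomputable def theta {R : Type*} [CommRing R] (f : PowerSeries R) : PowerSeries R :=
  PowerSeries.mk fun n => (n : R) * PowerSeries.coeff n f

theorem theta_mul {R : Type*} [CommRing R] (f g : PowerSeries R) :
    theta (f * g) = theta f * g + f * theta g := by
  ext n
  simp only [theta, PowerSeries.coeff_mk, map_add, PowerSeries.coeff_mul, Finset.mul_sum]
  rw [← Finset.sum_add_distrib]
  refine Finset.sum_congr rfl fun x hx => ?_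
  rw [← Finset.HasAntidiagonal.mem_antidiagonal.mp hx]
  push_cast
  ring

theorem theta_one {R : Type*} [CommRing R] : theta (1 : PowerSeries R) = 0 := by
  ext n
  simp only [theta, PowerSeries.coeff_mk, PowerSeries.coeff_one]
  split_ifs with h <;> simp [h]

noncomputable def F (N j : ℕ) : PowerSeries (A N) :=
  PowerSeries.mk fun n => (-1) ^ n * (n : A N) ^ j * esymm (Fin N) ℤ n

noncomputable def Hs (N : ℕ) : PowerSeries (A N) :=
  PowerSeries.mk fun n => hsymm (Fin N) ℤ n

noncomputable def P (N : ℕ) : PowerSeries (A N) :=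
  PowerSeries.mk fun n => if n = 0 then 0 else psum (Fin N) ℤ n

theorem theta_F (N j : ℕ) : theta (F N j) = F N (j + 1) := by
  ext n : 1
  simp only [theta, F, PowerSeries.coeff_mk]
  ring

theorem newton (N : ℕ) : F N 1 = - (F N 0 * P N) := by
  ext n : 1
  have h := mul_esymm_eq_sum (Fin N) ℤ n
  simp only [F, P, PowerSeries.coeff_mk, map_neg, PowerSeries.coeff_mul, pow_one, pow_zero, mul_one]
  rw [mul_assoc, h, ← mul_assoc, ← pow_add, Odd.neg_one_pow ⟨n, by ring⟩, neg_one_mul,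
    Finset.sum_filter]
  congr 1
  refine Finset.sum_congr rfl fun x hx => ?_
  have := Finset.HasAntidiagonal.mem_antidiagonal.mp hx
  by_cases h2 : x.2 = 0
  · rw [if_neg (by omega)]; simp [h2]
  · rw [if_pos (by omega)]; simp [h2]

theorem F_zero_eq (N : ℕ) : F N 0 =
    ∏ i : Fin N, (1 - PowerSeries.C (X i : A N) * PowerSeries.X) := by
  simp only [sub_eq_add_neg, Finset.prod_one_add]
  have : ∀ t : Finset (Fin N), ∏ i ∈ t, -(PowerSeries.C (X i : A N) * PowerSeries.X) =
      PowerSeries.C ((-1) ^ t.card * ∏ i ∈ t, (X i : A N)) * PowerSeries.X ^ t.card := by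
    intro t
    rw [Finset.prod_neg, Finset.prod_mul_distrib, Finset.prod_const]
    simp [mul_assoc]
  simp only [this]
  ext n : 1
  rw [map_sum]
  simp only [PowerSeries.coeff_C_mul, PowerSeries.coeff_X_pow, F, PowerSeries.coeff_mk, esymm,
    pow_zero, mul_one, mul_ite, mul_zero]
  rw [← Finset.sum_filter, Finset.mul_sum]
  refine Finset.sum_congr ?_ ?_
  · ext t; simp [Finset.mem_powersetCard, eq_comm]
  · intro t ht
    rw [(Finset.mem_filter.mp ht).2]

theorem Hs_eq (N : ℕ) : Hs N = ∏ i : Fin N, PowerSeries.mk fun n => (X i : A N) ^ n := by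
  ext n : 1
  rw [PowerSeries.coeff_prod]
  simp only [Hs, PowerSeries.coeff_mk, hsymm]
  refine Finset.sum_bij (fun s _ => Multiset.toFinsupp (s : Multiset (Fin N))) ?_ ?_ ?_ ?_
  · intro s _
    rw [Finset.mem_finsuppAntidiag]
    refine ⟨?_, Finset.subset_univ _⟩
    have h : ∑ a : Fin N, (s : Multiset (Fin N)).count a = (s : Multiset (Fin N)).card :=
      Multiset.sum_count_eq_card (fun a _ => Finset.mem_univ a)
    exact h.trans s.2
  · intro s _ t _ h
    exact Subtype.ext (Multiset.toFinsupp.injective h)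
  · intro f hf
    have hf := (Finset.mem_finsuppAntidiag.mp hf).1
    refine ⟨⟨Finsupp.toMultiset f, ?_⟩, Finset.mem_univ _, ?_⟩
    · rw [Finsupp.card_toMultiset, Finsupp.sum_fintype _ _ (by simp)]; simpa using hf
    · simp
  · intro s _
    rw [Finset.prod_multiset_map_count]
    simp only [Multiset.toFinsupp_apply]
    refine Finset.prod_subset (Finset.subset_univ _) ?_
    intro x _ hx
    rw [Multiset.mem_toFinset] at hx
    simp only [Sym.val_eq_coe] at *
    rw [Multiset.count_eq_zero_of_notMem hx, pow_zero]

theorem geom {R : Type*} [CommRing R] (x : R) :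
    (1 - PowerSeries.C x * PowerSeries.X) * (PowerSeries.mk fun n => x ^ n) = 1 := by
  ext n
  rw [sub_mul, one_mul, map_sub, mul_assoc, PowerSeries.coeff_C_mul]
  cases n with
  | zero => simp
  | succ n => simp [PowerSeries.coeff_succ_X_mul, PowerSeries.coeff_one, pow_succ']

theorem F_mul_Hs (N : ℕ) : F N 0 * Hs N = 1 := by
  rw [F_zero_eq, Hs_eq, ← Finset.prod_mul_distrib]
  exact Finset.prod_eq_one fun i _ => geom _

theorem theta_Hs (N : ℕ) : theta (Hs N) = P N * Hs N := by
  have h := theta_mul (F N 0) (Hs N)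
  rw [F_mul_Hs, theta_one, theta_F, newton] at h
  have h1 := F_mul_Hs N
  linear_combination (-(Hs N)) * h + (P N * Hs N - theta (Hs N)) * h1

theorem step (N j : ℕ) : F N (j + 1) * Hs N =
    - (P N * (F N j * Hs N)) + theta (F N j * Hs N) := by
  rw [theta_mul, theta_F, theta_Hs]; ring

theorem base (N : ℕ) : F N 1 * Hs N = - P N := by
  rw [newton]; linear_combination (- P N) * F_mul_Hs N

theorem main (N j r : ℕ) (hr : 1 ≤ r) :
    symH N (j + 1) r = PowerSeries.coeff r (F N (j + 1) * Hs N) := by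
  induction j generalizing r with
  | zero =>
    rw [base, symH]
    simp [P, show r ≠ 0 by omega]
  | succ j ih =>
    rw [step, symH, map_add, map_neg, ih r hr]
    congr 1
    · rw [mul_comm (P N), PowerSeries.coeff_mul,
        Finset.Nat.sum_antidiagonal_eq_sum_range_succ_mk, ← Finset.sum_neg_distrib]
      refine Finset.sum_subset_zero_on_sdiff ?_ ?_ ?_
      · intro l hl
        simp only [Finset.mem_Ico, Finset.mem_range] at *
        omega
      · intro l hl
        simp only [Finset.mem_Ico, Finset.mem_range, Finset.mem_sdiff] at hl
        have : l = 0 ∨ l = r := by omega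
        rcases this with rfl | rfl
        · simp [F]
        · simp [P]
      · intro l hl
        simp only [Finset.mem_Ico] at hl
        rw [ih l hl.1, P, PowerSeries.coeff_mk, if_neg (by omega)]
        ring
    · simp [theta]

theorem main2 (N j r : ℕ) (hj : 1 ≤ j) (hr : 1 ≤ r) :
    symH N j r
      = ∑ ν ∈ Finset.Icc 1 r,
          C ((-1 : ℤ) ^ ν * (ν : ℤ) ^ j) * (esymm (Fin N) ℤ ν * hsymm (Fin N) ℤ (r - ν)) := by
  obtain ⟨j, rfl⟩ := Nat.exists_eq_add_of_le' hj
  rw [main N j r hr, PowerSeries.coeff_mul, Finset.Nat.sum_antidiagonal_eq_sum_range_succ_mk]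
  symm
  refine Finset.sum_subset_zero_on_sdiff ?_ ?_ ?_
  · intro l hl
    simp only [Finset.mem_Icc, Finset.mem_range] at *
    omega
  · intro l hl
    simp only [Finset.mem_Icc, Finset.mem_range, Finset.mem_sdiff] at hl
    have : l = 0 := by omega
    subst this
    simp [F]
  · intro l hl
    simp [F, Hs, mul_assoc]

end SymHAux

/-- Equation (A.6) of Rodgers, "The covariance of almost-primes in F_q[T]":
`H_j^{(r)} = Σ_{ν=1}^{min(r,N)} (−1)^ν ν^j e_ν h_{r−ν}`, and equivalently
(since `e_ν = 0` for `ν > N`) `H_j^{(r)} = Σ_{ν=1}^{r} (−1)^ν ν^j e_ν h_{r−ν}`. -/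
theorem symH_eq_sum_esymm_mul_hsymm (N j r : ℕ) (hN : 1 ≤ N) (hj : 1 ≤ j) (hr : 1 ≤ r) :
    symH N j r
      = ∑ ν ∈ Finset.Icc 1 (min r N),
          C ((-1 : ℤ) ^ ν * (ν : ℤ) ^ j) * (esymm (Fin N) ℤ ν * hsymm (Fin N) ℤ (r - ν))
    ∧ symH N j r
      = ∑ ν ∈ Finset.Icc 1 r,
          C ((-1 : ℤ) ^ ν * (ν : ℤ) ^ j) * (esymm (Fin N) ℤ ν * hsymm (Fin N) ℤ (r - ν)) := by
  have h := SymHAux.main2 N j r hj hr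
  refine ⟨?_, h⟩
  rw [h]
  symm
  refine Finset.sum_subset ?_ ?_
  · intro l hl
    simp only [Finset.mem_Icc] at *
    omega
  · intro l hl hl2
    simp only [Finset.mem_Icc] at *
    have hlt : N < l := by omega
    have : esymm (Fin N) ℤ l = 0 := by
      rw [esymm, Finset.powersetCard_eq_empty.mpr (by simpa using hlt), Finset.sum_empty]
    rw [this, zero_mul, mul_zero]
end
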